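/- Let ⟨α,α'⟩ be an (m,n)-shuffle and let i ∈ ⌞⟨α,α'⟩. Then there exists a unique (m,n)-shuffle ⟨β,β'⟩ such that ⟨β,β'⟩ is an immediate predecessor of ⟨α,α'⟩ and β(j) = α(j) for all j ≠ i. Moreover this ⟨β,β'⟩ satisfies β(i) = α(i) − 1. -/

import Mathlib

/-- Extend a map `Fin (N+1) → Fin (M+1)` to a `ℕ`-valued map on all of `ℕ`,
clamping the input to the range `{0, …, N}`. -/
def extendFin {N M : ℕ} (f : Fin (N + 1) → Fin (M + 1)) (i : ℕ) : ℕ :=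
  (f ⟨min i N, Nat.lt_succ_of_le (min_le_right i N)⟩ : ℕ)

/-- `⟨α, α'⟩` is an `(m,n)`-shuffle: both maps are monotone surjections and
`α i + α' i = i` for all `i`. -/
def IsShuffle (m n : ℕ) (α : Fin (m + n + 1) → Fin (m + 1))
    (α' : Fin (m + n + 1) → Fin (n + 1)) : Prop :=
  Monotone α ∧ Monotone α' ∧ Function.Surjective α ∧ Function.Surjective α' ∧
    ∀ i : Fin (m + n + 1), (α i : ℕ) + (α' i : ℕ) = (i : ℕ)

/-- The pointwise order on `(m,n)`-shuffles (a shuffle is determined by its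
first component). -/
def ShuffleLE (m n : ℕ) (α β : Fin (m + n + 1) → Fin (m + 1)) : Prop :=
  ∀ i, α i ≤ β i

/-- The strict pointwise order on `(m,n)`-shuffles. -/
def ShuffleLT (m n : ℕ) (α β : Fin (m + n + 1) → Fin (m + 1)) : Prop :=
  ShuffleLE m n α β ∧ α ≠ β

/-- The lower-right corner set `⌞⟨α,α'⟩`: all `i` with `1 ≤ i ≤ m+n-1` such that
`α(i+1) = α(i) = α(i-1)+1`. -/
def lrCorner (m n : ℕ) (α : Fin (m + n + 1) → Fin (m + 1)) : Set ℕ :=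
  {i | 1 ≤ i ∧ i + 1 ≤ m + n ∧
    extendFin α (i + 1) = extendFin α i ∧ extendFin α i = extendFin α (i - 1) + 1}

/-- The upper-left corner set `⌜⟨α,α'⟩`: all `i` with `1 ≤ i ≤ m+n-1` such that
`α(i+1) = α(i)+1 = α(i-1)+1`. -/
def ulCorner (m n : ℕ) (α : Fin (m + n + 1) → Fin (m + 1)) : Set ℕ :=
  {i | 1 ≤ i ∧ i + 1 ≤ m + n ∧
    extendFin α (i + 1) = extendFin α i + 1 ∧ extendFin α i = extendFin α (i - 1)}

/-- `⟨β,β'⟩` is an immediate predecessor of `⟨α,α'⟩`: it is a shuffle, `β < α`,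
and no shuffle lies strictly between them. -/
def IsImmPred (m n : ℕ)
    (β : Fin (m + n + 1) → Fin (m + 1)) (β' : Fin (m + n + 1) → Fin (n + 1))
    (α : Fin (m + n + 1) → Fin (m + 1)) (α' : Fin (m + n + 1) → Fin (n + 1)) : Prop :=
  IsShuffle m n β β' ∧ ShuffleLT m n β α ∧
    ∀ (γ : Fin (m + n + 1) → Fin (m + 1)) (γ' : Fin (m + n + 1) → Fin (n + 1)),
      IsShuffle m n γ γ' → ¬ (ShuffleLT m n β γ ∧ ShuffleLT m n γ α)

/-- `⟨γ,γ'⟩` is an immediate successor of `⟨α,α'⟩`: it is a shuffle, `α < γ`,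
and no shuffle lies strictly between them. -/
def IsImmSucc (m n : ℕ)
    (γ : Fin (m + n + 1) → Fin (m + 1)) (γ' : Fin (m + n + 1) → Fin (n + 1))
    (α : Fin (m + n + 1) → Fin (m + 1)) (α' : Fin (m + n + 1) → Fin (n + 1)) : Prop :=
  IsShuffle m n γ γ' ∧ ShuffleLT m n α γ ∧
    ∀ (δ : Fin (m + n + 1) → Fin (m + 1)) (δ' : Fin (m + n + 1) → Fin (n + 1)),
      IsShuffle m n δ δ' → ¬ (ShuffleLT m n α δ ∧ ShuffleLT m n δ γ)

/-!
Lowering a shuffle at a corner `b`, with neighbours `a ⋖ b ⋖ c`, replaces `α b` by `α a` and `α' b`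
by `α' c`. Both maps stay monotone, since each new value is that of a neighbour, and both stay
surjective, since the corner condition says `α b = α c` and `α' b = α' a`. As `α a ⋖ α b`, the
lowered map is covered by `α` in the lattice of *all* functions, so a fortiori among shuffles.
Conversely, a shuffle `β < α` equal to `α` off `b` has `α a = β a ≤ β b < α b`, forcing
`β b = α a`.
-/

open Function

section Update

variable {ι κ : Type*}

theorem monotone_update_of_covBy_left [LinearOrder ι] [Preorder κ] {f : ι → κ} {a i : ι}
    (hf : Monotone f) (hai : a ⋖ i) : Monotone (update f i (f a)) := by
  intro j k hjk
  rcases eq_or_ne j i with hj | hj <;> rcases eq_or_ne k i with hk | hk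
  · rw [hj, hk]
  · rw [hj, update_self, update_of_ne hk]
    exact hf (hai.le.trans (hj ▸ hjk))
  · rw [hk, update_self, update_of_ne hj]
    exact hf (hai.le_of_lt ((hk ▸ hjk).lt_of_ne hj))
  · rw [update_of_ne hj, update_of_ne hk]
    exact hf hjk

theorem monotone_update_of_covBy_right [LinearOrder ι] [Preorder κ] {f : ι → κ} {i c : ι}
    (hf : Monotone f) (hic : i ⋖ c) : Monotone (update f i (f c)) :=
  (monotone_update_of_covBy_left hf.dual hic.toDual).dual

theorem surjective_update_of_apply_eq [DecidableEq ι] {f : ι → κ} {i j : ι}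
    (hf : Surjective f) (hji : j ≠ i) (hfj : f j = f i) (y : κ) : Surjective (update f i y) := by
  intro z
  obtain ⟨x, rfl⟩ := hf z
  rcases eq_or_ne x i with rfl | hx
  · exact ⟨j, by rw [update_of_ne hji, hfj]⟩
  · exact ⟨x, update_of_ne hx _ _⟩

theorem update_covBy_self [DecidableEq ι] [PartialOrder κ] {f : ι → κ} {i : ι} {y : κ}
    (hy : y ⋖ f i) : update f i y ⋖ f :=
  Pi.covBy_iff_exists_left_eq.2 ⟨i, y, hy, rfl⟩

theorem eq_update_of_lt_of_covBy [DecidableEq ι] [Preorder ι] [PartialOrder κ] {f g : ι → κ}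
    {a i : ι} (hf : Monotone f) (hfg : f < g) (heq : ∀ j ≠ i, f j = g j) (hai : a < i)
    (hg : g a ⋖ g i) : f = update g i (g a) := by
  have hge : g a ≤ f i := heq a hai.ne ▸ hf hai.le
  have hne : f i ≠ g i := fun h ↦ hfg.ne <| funext fun j ↦
    (eq_or_ne j i).elim (fun hj ↦ hj ▸ h) (heq j)
  exact eq_update_iff.2 ⟨(hg.eq_or_eq hge (hfg.le i)).resolve_right hne, heq⟩

end Update

theorem fin_covBy_iff_val_add_one_eq {N : ℕ} {a b : Fin N} : a ⋖ b ↔ (a : ℕ) + 1 = b :=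
  Fin.covBy_iff.trans Nat.covBy_iff_add_one_eq

theorem extendFin_val {N M : ℕ} (f : Fin (N + 1) → Fin (M + 1)) (k : Fin (N + 1)) :
    extendFin f k = f k := by
  simp only [extendFin, min_eq_left k.is_le]

section Shuffle

variable {m n : ℕ} {α β : Fin (m + n + 1) → Fin (m + 1)} {α' β' : Fin (m + n + 1) → Fin (n + 1)}

theorem shuffleLT_iff_lt : ShuffleLT m n α β ↔ α < β :=
  (lt_iff_le_and_ne (a := α) (b := β)).symm

theorem exists_covBy_of_mem_lrCorner {i : ℕ} (hi : i ∈ lrCorner m n α) :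
    ∃ a b c : Fin (m + n + 1), (b : ℕ) = i ∧ a ⋖ b ∧ b ⋖ c ∧ α a ⋖ α b ∧ α c = α b := by
  obtain ⟨hpos, hlt, hflat, hstep⟩ := hi
  let a : Fin (m + n + 1) := ⟨i - 1, by omega⟩
  let b : Fin (m + n + 1) := ⟨i, by omega⟩
  let c : Fin (m + n + 1) := ⟨i + 1, by omega⟩
  have hαa : extendFin α (i - 1) = α a := extendFin_val α a
  have hαb : extendFin α i = α b := extendFin_val α b
  have hαc : extendFin α (i + 1) = α c := extendFin_val α c
  have hab : a ⋖ b := fin_covBy_iff_val_add_one_eq.2 (Nat.sub_add_cancel hpos)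
  have hbc : b ⋖ c := fin_covBy_iff_val_add_one_eq.2 rfl
  exact ⟨a, b, c, rfl, hab, hbc, fin_covBy_iff_val_add_one_eq.2 (by omega), Fin.ext (by omega)⟩

namespace IsShuffle

theorem add_eq (hα : IsShuffle m n α α') (j : Fin (m + n + 1)) : (α j : ℕ) + α' j = j :=
  hα.2.2.2.2 j

theorem snd_unique (hα : IsShuffle m n α α') (hβ : IsShuffle m n α β') : α' = β' := by
  funext j
  have hαj := hα.add_eq j
  have hβj := hβ.add_eq j
  exact Fin.ext (by omega)

theorem update_corner (hα : IsShuffle m n α α') {a b c : Fin (m + n + 1)} (hab : a ⋖ b)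
    (hbc : b ⋖ c) (hstep : α a ⋖ α b) (hflat : α c = α b) :
    IsShuffle m n (update α b (α a)) (update α' b (α' c)) := by
  have ⟨hmono, hmono', hsurj, hsurj', hsum⟩ := hα
  have hab_val : (a : ℕ) + 1 = b := fin_covBy_iff_val_add_one_eq.1 hab
  have hbc_val : (b : ℕ) + 1 = c := fin_covBy_iff_val_add_one_eq.1 hbc
  have hstep_val : (α a : ℕ) + 1 = α b := fin_covBy_iff_val_add_one_eq.1 hstep
  have hflat_val : (α c : ℕ) = α b := congrArg Fin.val hflat
  have hsum_a := hsum a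
  have hsum_b := hsum b
  have hsum_c := hsum c
  have hflat' : α' a = α' b := Fin.ext (by omega)
  refine ⟨monotone_update_of_covBy_left hmono hab, monotone_update_of_covBy_right hmono' hbc,
    surjective_update_of_apply_eq hsurj hbc.ne' hflat _,
    surjective_update_of_apply_eq hsurj' hab.ne hflat' _, fun j ↦ ?_⟩
  rcases eq_or_ne j b with rfl | hj
  · rw [update_self, update_self]
    omega
  · rw [update_of_ne hj, update_of_ne hj]
    exact hsum j

theorem isImmPred_of_covBy (hβ : IsShuffle m n β β') (hβα : β ⋖ α) : IsImmPred m n β β' α α' :=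
  ⟨hβ, shuffleLT_iff_lt.2 hβα.lt, fun _ _ _ ⟨hβγ, hγα⟩ ↦
    hβα.2 (shuffleLT_iff_lt.1 hβγ) (shuffleLT_iff_lt.1 hγα)⟩

end IsShuffle

end Shuffle

/-- For `i` in the lower-right corner set of a shuffle `⟨α,α'⟩`, there is a unique
shuffle `⟨β,β'⟩` which is an immediate predecessor of `⟨α,α'⟩` and agrees with it
away from `i`; moreover it satisfies `β i = α i - 1`. -/
theorem exists_unique_immPred_of_mem_lrCorner (m n : ℕ)
    (α : Fin (m + n + 1) → Fin (m + 1)) (α' : Fin (m + n + 1) → Fin (n + 1))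
    (hα : IsShuffle m n α α') (i : ℕ) (hi : i ∈ lrCorner m n α) :
    (∃! p : (Fin (m + n + 1) → Fin (m + 1)) × (Fin (m + n + 1) → Fin (n + 1)),
      IsImmPred m n p.1 p.2 α α' ∧
        ∀ j : Fin (m + n + 1), (j : ℕ) ≠ i → p.1 j = α j) ∧
    (∀ p : (Fin (m + n + 1) → Fin (m + 1)) × (Fin (m + n + 1) → Fin (n + 1)),
      IsImmPred m n p.1 p.2 α α' →
        (∀ j : Fin (m + n + 1), (j : ℕ) ≠ i → p.1 j = α j) →
        extendFin p.1 i = extendFin α i - 1) := by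
  obtain ⟨a, b, c, rfl, hab, hbc, hstep, hflat⟩ := exists_covBy_of_mem_lrCorner hi
  have hlow := hα.update_corner hab hbc hstep hflat
  have fst_eq : ∀ p : (Fin (m + n + 1) → Fin (m + 1)) × (Fin (m + n + 1) → Fin (n + 1)),
      IsImmPred m n p.1 p.2 α α' → (∀ j : Fin (m + n + 1), (j : ℕ) ≠ b → p.1 j = α j) →
      p.1 = update α b (α a) := fun p hp heq ↦
    eq_update_of_lt_of_covBy hp.1.1 (shuffleLT_iff_lt.1 hp.2.1)
      (fun j hj ↦ heq j (Fin.val_ne_of_ne hj)) hab.lt hstep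
  refine ⟨⟨(update α b (α a), update α' b (α' c)), ⟨?_, ?_⟩, ?_⟩, ?_⟩
  · exact hlow.isImmPred_of_covBy (update_covBy_self hstep)
  · exact fun j hj ↦ update_of_ne (Fin.ne_of_val_ne hj) _ _
  · rintro ⟨β, β'⟩ ⟨hβ, heq⟩
    obtain rfl : β = update α b (α a) := fst_eq _ hβ heq
    exact congrArg _ (hβ.1.snd_unique hlow)
  · intro p hp heq
    have hstep_val : (α a : ℕ) + 1 = α b := fin_covBy_iff_val_add_one_eq.1 hstep
    rw [extendFin_val, extendFin_val, fst_eq p hp heq, update_self]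
    omega
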